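/- arXiv:2505.07676 — 2 statements merged into one kernel-verified Lean document; each statement's English description precedes it below -/
import Mathlib

section
/- Let K ∈ ℝ^{n×n} be a symmetric positive semidefinite matrix, C ∈ ℝ^{M×n}, y ∈ ℝ^M, λ > 0, and let ω_1,…,ω_M > 0 be weights. Set Λ = diag(λ/ω_1,…,λ/ω_M) and define F(β) = Σ_{m=1}^M ω_m (y_m − (C K β)_m)² + λ βᵀ K β for β ∈ ℝ^n. Then the matrix C K Cᵀ + Λ is invertible, the vector β* = Cᵀ (C K Cᵀ + Λ)^{-1} y is a global minimizer of F, and every global minimizer β of F satisfies K β = K β*. -/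
open Matrix

/-- Finite-dimensional core of the vector-valued kernel ridge regression
representer theorem: with `K` symmetric positive semidefinite, weights `ω_m > 0`,
`Λ = diag(λ/ω_1,…,λ/ω_M)` and
`F(β) = Σ_m ω_m (y_m − (C K β)_m)² + λ βᵀ K β`, the matrix `C K Cᵀ + Λ` is
invertible, `β* = Cᵀ (C K Cᵀ + Λ)⁻¹ y` is a global minimizer of `F`, and every
global minimizer `β` of `F` satisfies `K β = K β*`. -/
theorem stmt_0 {n M : ℕ} (K : Matrix (Fin n) (Fin n) ℝ) (hK : K.PosSemidef)
    (C : Matrix (Fin M) (Fin n) ℝ) (y : Fin M → ℝ)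
    (lam : ℝ) (hlam : 0 < lam) (ω : Fin M → ℝ) (hω : ∀ m, 0 < ω m)
    (Λ : Matrix (Fin M) (Fin M) ℝ)
    (hΛ : Λ = Matrix.diagonal fun m => lam / ω m)
    (F : (Fin n → ℝ) → ℝ)
    (hF : F = fun β => (∑ m, ω m * (y m - (C *ᵥ (K *ᵥ β)) m) ^ 2)
      + lam * (β ⬝ᵥ (K *ᵥ β)))
    (βstar : Fin n → ℝ)
    (hβstar : βstar = Cᵀ *ᵥ ((C * K * Cᵀ + Λ)⁻¹ *ᵥ y)) :
    IsUnit (C * K * Cᵀ + Λ) ∧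
      (∀ β, F βstar ≤ F β) ∧
      (∀ β, (∀ β', F β ≤ F β') → K *ᵥ β = K *ᵥ βstar) := by
  have hΛpd : Λ.PosDef := by
    rw [hΛ]
    exact Matrix.PosDef.diagonal (fun m => div_pos hlam (hω m))
  have hS : (C * K * Cᵀ).PosSemidef := by
    have := hK.mul_mul_conjTranspose_same C
    rwa [conjTranspose_eq_transpose_of_trivial] at this
  have hU : IsUnit (C * K * Cᵀ + Λ) := (Matrix.PosDef.posSemidef_add hS hΛpd).isUnit
  have hdet := (Matrix.isUnit_iff_isUnit_det _).1 hU
  obtain ⟨a, ha⟩ : ∃ a, a = (C * K * Cᵀ + Λ)⁻¹ *ᵥ y := ⟨_, rfl⟩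
  rw [← ha] at hβstar
  have hy : (C * K * Cᵀ + Λ) *ᵥ a = y := by
    rw [ha, mulVec_mulVec, Matrix.mul_nonsing_inv _ hdet, one_mulVec]
  have hres : ∀ m, y m - (C *ᵥ (K *ᵥ βstar)) m = lam / ω m * a m := by
    intro m
    have h := congrFun hy m
    rw [add_mulVec, Pi.add_apply, hΛ, mulVec_diagonal, ← mulVec_mulVec, ← mulVec_mulVec,
      ← hβstar] at h
    linarith
  have hcross : ∀ d, βstar ⬝ᵥ (K *ᵥ d) = ∑ m, a m * (C *ᵥ (K *ᵥ d)) m := by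
    intro d
    rw [hβstar, mulVec_transpose, ← dotProduct_mulVec]
    rfl
  have hT : Kᵀ = K := by
    have := hK.isHermitian.eq
    rwa [conjTranspose_eq_transpose_of_trivial] at this
  have hsymm : ∀ d, d ⬝ᵥ (K *ᵥ βstar) = βstar ⬝ᵥ (K *ᵥ d) := by
    intro d
    rw [dotProduct_mulVec, ← mulVec_transpose, hT, dotProduct_comm]
  have key : ∀ d, F (βstar + d) = F βstar + (∑ m, ω m * ((C *ᵥ (K *ᵥ d)) m) ^ 2)
      + lam * (d ⬝ᵥ (K *ᵥ d)) := by
    intro d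
    have hsum : (∑ m, ω m * (y m - (C *ᵥ (K *ᵥ (βstar + d))) m) ^ 2)
        = (∑ m, ω m * (y m - (C *ᵥ (K *ᵥ βstar)) m) ^ 2)
          + (∑ m, ω m * ((C *ᵥ (K *ᵥ d)) m) ^ 2)
          - 2 * lam * ∑ m, a m * (C *ᵥ (K *ᵥ d)) m := by
      rw [Finset.mul_sum, ← Finset.sum_add_distrib, ← Finset.sum_sub_distrib]
      refine Finset.sum_congr rfl fun m _ => ?_
      have h1 := hres m
      have h2 : ω m * (y m - (C *ᵥ (K *ᵥ βstar)) m) = lam * a m := by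
        rw [h1]
        have := (hω m).ne'
        field_simp
      rw [mulVec_add, mulVec_add, Pi.add_apply]
      linear_combination (-2 * (C *ᵥ (K *ᵥ d)) m) * h2
    simp only [hF]
    rw [hsum, mulVec_add, add_dotProduct, dotProduct_add, dotProduct_add, hsymm d, hcross d]
    ring
  have hq : ∀ d, 0 ≤ d ⬝ᵥ (K *ᵥ d) := fun d => by
    simpa using hK.dotProduct_mulVec_nonneg d
  have hs : ∀ d, 0 ≤ ∑ m, ω m * ((C *ᵥ (K *ᵥ d)) m) ^ 2 := fun d =>
    Finset.sum_nonneg fun m _ => mul_nonneg (hω m).le (sq_nonneg _)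
  refine ⟨hU, fun β => ?_, fun β hβ => ?_⟩
  · have h := key (β - βstar)
    rw [add_sub_cancel] at h
    have := mul_nonneg hlam.le (hq (β - βstar))
    linarith [hs (β - βstar)]
  · have h := key (β - βstar)
    rw [add_sub_cancel] at h
    have h1 := hβ βstar
    have h2 := hs (β - βstar)
    have h3 : (β - βstar) ⬝ᵥ (K *ᵥ (β - βstar)) = 0 := by
      refine le_antisymm ?_ (hq _)
      by_contra hc
      have := mul_pos hlam (not_le.1 hc)
      linarith
    have h4 : K *ᵥ (β - βstar) = 0 :=
      (hK.dotProduct_mulVec_zero_iff _).1 (by simpa using h3)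
    rw [mulVec_sub] at h4
    exact sub_eq_zero.1 h4
end

section
/- Let K : E × E → ℝ^{A×A} be a matrix-valued kernel. Define the diagonal matrix S(x) ∈ ℝ^{A×A} by S_{aa}(x) = K_{aa}(x,x)^{1/2}, and define R : E × E → ℝ^{A×A} by: R_{ab}(x,y) = 1 if a = b and x = y; R_{ab}(x,y) = S_{aa}(x)^{-1} K_{ab}(x,y) S_{bb}(y)^{-1} if S_{aa}(x) > 0 and S_{bb}(y) > 0; and R_{ab}(x,y) = 0 otherwise. Then R is a matrix-valued kernel that is normalized in the sense that R_{aa}(x,x) = 1 for all a and x, and the decomposition K(x,y) = S(x) R(x,y) S(y) holds for all x,y ∈ E. -/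
open Matrix

/-- A matrix-valued kernel on a set `E`: `K(x,y)ᵀ = K(y,x)` and
`Σ_{i,j} v_iᵀ K(x_i,x_j) v_j ≥ 0` for all finite collections of points and
vectors. -/
def IsMatrixKernel {E : Type*} {A : ℕ} (K : E → E → Matrix (Fin A) (Fin A) ℝ) : Prop :=
  (∀ x y, (K x y)ᵀ = K y x) ∧
    ∀ (n : ℕ) (x : Fin n → E) (v : Fin n → Fin A → ℝ),
      0 ≤ ∑ i, ∑ j, v i ⬝ᵥ ((K (x i) (x j)) *ᵥ v j)

theorem IsMatrixKernel.diag_nonneg {E : Type*} {A : ℕ} {K : E → E → Matrix (Fin A) (Fin A) ℝ}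
    (hK : IsMatrixKernel K) (x : E) (a : Fin A) : 0 ≤ K x x a a := by
  have h := hK.2 1 (fun _ => x) (fun _ => Pi.single a 1)
  simpa using h

theorem IsMatrixKernel.eq_zero {E : Type*} {A : ℕ} {K : E → E → Matrix (Fin A) (Fin A) ℝ}
    (hK : IsMatrixKernel K) (x y : E) (a b : Fin A) (h0 : K x x a a = 0) : K x y a b = 0 := by
  have hsym : K y x b a = K x y a b := by
    rw [← hK.1 x y]; rfl
  have key : ∀ t : ℝ, 0 ≤ 2 * t * K x y a b + K y y b b := by
    intro t
    have h := hK.2 2 ![x, y] ![Pi.single a t, Pi.single b 1]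
    simp [Fin.sum_univ_two, h0, hsym, Matrix.mulVec_single] at h
    linarith
  by_contra hne
  have h := key (-(K y y b b + 1) / (2 * K x y a b))
  have e : 2 * (-(K y y b b + 1) / (2 * K x y a b)) * K x y a b = -(K y y b b + 1) := by
    field_simp
  rw [e] at h
  linarith

open Classical in
theorem sum_eq_nonneg {E : Type*} {n : ℕ} (x : Fin n → E) (u : Fin n → ℝ) :
    0 ≤ ∑ i, ∑ j, (if x i = x j then u i * u j else 0) := by
  have : ∑ i, ∑ j, (if x i = x j then u i * u j else 0) =
      ∑ z ∈ Finset.univ.image x, (∑ i, if x i = z then u i else 0) ^ 2 := by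
    simp_rw [sq, Finset.sum_mul_sum]
    rw [Finset.sum_comm]
    rw [Finset.sum_comm (s := Finset.univ.image x)]
    rw [Finset.sum_comm]
    refine Finset.sum_congr rfl fun i _ => ?_
    rw [Finset.sum_comm]
    refine Finset.sum_congr rfl fun j _ => ?_
    rw [Finset.sum_eq_single (x i)]
    · by_cases h : x i = x j
      · simp [h]
      · simp [h, Ne.symm h]
    · intro z _ hz
      simp [Ne.symm hz]
    · intro h; simp at h
  rw [this]
  exact Finset.sum_nonneg fun z _ => sq_nonneg _

/-- Kernel normalization decomposition (existence part): for a matrix-valued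
kernel `K`, with `S(x) = diag(K_{aa}(x,x)^{1/2})` and `R` defined by
`R_{ab}(x,y) = 1` if `a = b` and `x = y`,
`R_{ab}(x,y) = S_{aa}(x)⁻¹ K_{ab}(x,y) S_{bb}(y)⁻¹` if `S_{aa}(x) > 0` and
`S_{bb}(y) > 0`, and `R_{ab}(x,y) = 0` otherwise, the function `R` is a
normalized matrix-valued kernel and `K(x,y) = S(x) R(x,y) S(y)`. -/
theorem stmt_10 {E : Type*} {A : ℕ} (K : E → E → Matrix (Fin A) (Fin A) ℝ)
    (hK : IsMatrixKernel K)
    (S : E → Matrix (Fin A) (Fin A) ℝ)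
    (hS : ∀ x, S x = Matrix.diagonal (fun a => Real.sqrt (K x x a a)))
    (R : E → E → Matrix (Fin A) (Fin A) ℝ)
    (hRdiag : ∀ (a : Fin A) (x : E), R x x a a = 1)
    (hRpos : ∀ (a b : Fin A) (x y : E), 0 < S x a a → 0 < S y b b →
      R x y a b = (S x a a)⁻¹ * K x y a b * (S y b b)⁻¹)
    (hRzero : ∀ (a b : Fin A) (x y : E), ¬(a = b ∧ x = y) →
      ¬(0 < S x a a ∧ 0 < S y b b) → R x y a b = 0) :
    IsMatrixKernel R ∧ (∀ (a : Fin A) (x : E), R x x a a = 1) ∧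
      ∀ x y, K x y = S x * R x y * S y := by
  classical
  have hs : ∀ x a, S x a a = Real.sqrt (K x x a a) := fun x a => by simp [hS]
  have hs0 : ∀ x a, 0 ≤ S x a a := fun x a => by rw [hs]; exact Real.sqrt_nonneg _
  have hz : ∀ x a, S x a a = 0 → K x x a a = 0 := fun x a h => by
    rw [hs] at h
    exact (Real.sqrt_eq_zero (hK.diag_nonneg x a)).1 h
  have hsym : ∀ x y a b, K y x b a = K x y a b := fun x y a b => by
    rw [← hK.1 x y]; rfl
  have hR : ∀ x y a b, R x y a b = (S x a a)⁻¹ * K x y a b * (S y b b)⁻¹ +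
      (if a = b then (if x = y then (if S x a a = 0 then 1 else 0) else 0) else 0) := by
    intro x y a b
    by_cases hp : 0 < S x a a ∧ 0 < S y b b
    · rw [hRpos a b x y hp.1 hp.2]
      simp [hp.1.ne']
    · have hz' : S x a a = 0 ∨ S y b b = 0 := by
        by_contra hc
        push Not at hc
        exact hp ⟨lt_of_le_of_ne (hs0 _ _) hc.1.symm, lt_of_le_of_ne (hs0 _ _) hc.2.symm⟩
      have h1 : (S x a a)⁻¹ * K x y a b * (S y b b)⁻¹ = 0 := by
        rcases hz' with h | h <;> simp [h]
      rw [h1]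
      by_cases he : a = b ∧ x = y
      · obtain ⟨rfl, rfl⟩ := he
        have : S x a a = 0 := by tauto
        simp [hRdiag, this]
      · rw [hRzero a b x y he hp]
        by_cases hab : a = b
        · have : x ≠ y := fun h => he ⟨hab, h⟩
          simp [this]
        · simp [hab]
  refine ⟨⟨?_, ?_⟩, hRdiag, ?_⟩
  · intro x y
    ext a b
    rw [Matrix.transpose_apply, hR, hR, hsym]
    congr 1
    · ring
    · by_cases hab : b = a
      · subst hab
        by_cases hxy : x = y
        · subst hxy; rfl
        · simp [hxy, Ne.symm hxy]
      · simp [hab, Ne.symm hab]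
  · intro n x v
    have h1 := hK.2 n x (fun i a => v i a * (S (x i) a a)⁻¹)
    have h2 : 0 ≤ ∑ a, ∑ i, ∑ j, (if x i = x j then
        (if S (x i) a a = 0 then v i a else 0) * (if S (x j) a a = 0 then v j a else 0)
        else 0) := Finset.sum_nonneg fun a _ => sum_eq_nonneg x _
    have h3 := add_nonneg h1 h2
    refine h3.trans_eq ?_
    rw [Finset.sum_comm (s := (Finset.univ : Finset (Fin A))), ← Finset.sum_add_distrib]
    refine Finset.sum_congr rfl fun i _ => ?_
    rw [Finset.sum_comm (s := (Finset.univ : Finset (Fin A))), ← Finset.sum_add_distrib]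
    refine Finset.sum_congr rfl fun j _ => ?_
    simp only [dotProduct, Matrix.mulVec]
    rw [← Finset.sum_add_distrib]
    refine Finset.sum_congr rfl fun a _ => ?_
    simp only [hR, add_mul, Finset.sum_add_distrib, mul_add]
    congr 1
    · rw [Finset.mul_sum, Finset.mul_sum]
      refine Finset.sum_congr rfl fun b _ => ?_
      ring
    · by_cases hx : x i = x j
      · by_cases h : S (x j) a a = 0 <;> simp [hx, h]
      · simp [hx]
  · intro x y
    ext a b
    have e : (S x * R x y * S y) a b = S x a a * R x y a b * S y b b := by
      rw [hS x, hS y]; simp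
    rw [e]
    by_cases ha : S x a a = 0
    · rw [hK.eq_zero x y a b (hz x a ha), ha]; simp
    by_cases hb : S y b b = 0
    · rw [← hsym, hK.eq_zero y x b a (hz y b hb), hb]; simp
    rw [hRpos a b x y (lt_of_le_of_ne (hs0 _ _) (Ne.symm ha))
      (lt_of_le_of_ne (hs0 _ _) (Ne.symm hb))]
    field_simp
end
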